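/- For every finite loopless directed graph G, the fractional directed local chromatic number ψ_d*(G) equals the infimum of the ratios h/r over all pairs of positive integers r ≤ h such that G admits an h-local r-multi-coloring (with some finite color set). -/

import Mathlib

open Classical

/-- The underlying undirected simple graph of a digraph given by an arc relation `D`. -/
def underlying {V : Type*} (D : V → V → Prop) : SimpleGraph V := SimpleGraph.fromRel D

/-- `A` is an independent set of the simple graph `G`. -/
def IsIndepF {V : Type*} (G : SimpleGraph V) (A : Finset V) : Prop :=
  ∀ u ∈ A, ∀ v ∈ A, ¬ G.Adj u v

/-- A fractional coloring of `G`: nonnegative weights on the independent sets of `G` such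
that the sets containing any fixed vertex have total weight at least `1`. -/
structure FracColoring {V : Type*} [Fintype V] (G : SimpleGraph V) where
  x : Finset V → ℝ
  nonneg : ∀ A, 0 ≤ x A
  supp : ∀ A, x A ≠ 0 → IsIndepF G A
  cover : ∀ v : V, 1 ≤ ∑ A : Finset V, if v ∈ A then x A else 0

/-- The total weight of a fractional coloring. -/
noncomputable def totalWeight {V : Type*} [Fintype V] {G : SimpleGraph V}
    (f : FracColoring G) : ℝ :=
  ∑ A : Finset V, f.x A

/-- The fractional chromatic number `χ*(G)`: the minimum total weight of a fractional
coloring of `G`. -/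
noncomputable def fracChrom {V : Type*} [Fintype V] (G : SimpleGraph V) : ℝ :=
  sInf {w : ℝ | ∃ f : FracColoring G, w = totalWeight f}

/-- The local weight of a fractional coloring of a digraph `D`:
`1` plus the maximum over vertices `v` of the total weight of the independent sets meeting
the out-neighborhood of `v`. -/
noncomputable def localWeight {V : Type*} [Fintype V] (D : V → V → Prop)
    (f : FracColoring (underlying D)) : ℝ :=
  1 + ⨆ v : V, ∑ A : Finset V, if ∃ u ∈ A, D v u then f.x A else 0

/-- The fractional directed local chromatic number `ψ_d*(D)`: the minimum local weight of a
fractional coloring of `D`. -/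
noncomputable def fracDirLocal {V : Type*} [Fintype V] (D : V → V → Prop) : ℝ :=
  sInf {w : ℝ | ∃ f : FracColoring (underlying D), w = localWeight D f}

/-- An `r`-multi-coloring of a digraph: every vertex gets `r` colors, and each color class
is an independent set of the underlying undirected graph. -/
def IsMultiColoring {V C : Type*} (D : V → V → Prop) (r : ℕ) (χ : V → Finset C) : Prop :=
  (∀ v, (χ v).card = r) ∧
  ∀ (c : C) (u v : V), c ∈ χ u → c ∈ χ v → ¬ (underlying D).Adj u v

/-- An `h`-local `r`-multi-coloring: an `r`-multi-coloring in which the colors appearing on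
any out-neighborhood number at most `h - r`. -/
def IsHLocalMulti {V C : Type*} [Fintype V] (D : V → V → Prop) (h r : ℕ)
    (χ : V → Finset C) : Prop :=
  IsMultiColoring D r χ ∧
  ∀ v, ((Finset.univ.filter (fun u => D v u)).biUnion χ).card ≤ h - r

theorem exists_frac_of_multi {V : Type} [Fintype V] (D : V → V → Prop) (h r : ℕ)
    (χ : V → Finset ℕ) (hr : 0 < r) (hrh : r ≤ h) (H : IsHLocalMulti D h r χ) :
    ∃ f : FracColoring (underlying D), localWeight D f ≤ (h : ℝ) / r := by
  obtain ⟨⟨hcard, hind⟩, hloc⟩ := H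
  have hr' : (0 : ℝ) < r := by exact_mod_cast hr
  let U : Finset ℕ := Finset.univ.biUnion χ
  let cls : ℕ → Finset V := fun c => Finset.univ.filter (fun v => c ∈ χ v)
  let x : Finset V → ℝ := fun A => ((U.filter (fun c => cls c = A)).card : ℝ) / r
  have key : ∀ (P : Finset V → Prop) [DecidablePred P], (∑ A : Finset V, if P A then x A else 0)
      = ((U.filter (fun c => P (cls c))).card : ℝ) / r := by
    intro P _
    rw [← Finset.sum_filter, ← Finset.sum_div]
    congr 1
    rw [← Nat.cast_sum]
    congr 1
    rw [Finset.card_eq_sum_card_fiberwise (f := cls) (t := Finset.univ.filter P)]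
    · apply Finset.sum_congr rfl
      intro A hA
      congr 1
      ext c
      simp only [Finset.mem_filter, Finset.mem_univ, true_and] at hA ⊢
      constructor
      · rintro ⟨h1, h2⟩
        exact ⟨⟨h1, h2 ▸ hA⟩, h2⟩
      · rintro ⟨⟨h1, _⟩, h2⟩
        exact ⟨h1, h2⟩
    · intro c hc
      simpa using (Finset.mem_filter.1 hc).2
  have hU : ∀ v c, c ∈ χ v → c ∈ U := fun v c hc =>
    Finset.mem_biUnion.2 ⟨v, Finset.mem_univ _, hc⟩
  have hcls : ∀ v c, v ∈ cls c ↔ c ∈ χ v := by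
    intro v c
    simp [cls]
  refine ⟨⟨x, fun A => by positivity, ?_, ?_⟩, ?_⟩
  · intro A hA u hu v hv
    have : (U.filter (fun c => cls c = A)).Nonempty := by
      by_contra hne
      rw [Finset.not_nonempty_iff_eq_empty] at hne
      apply hA
      simp [x, hne]
    obtain ⟨c, hc⟩ := this
    have hc2 := (Finset.mem_filter.1 hc).2
    subst hc2
    exact hind c u v ((hcls u c).1 hu) ((hcls v c).1 hv)
  · intro v
    have h1 := key (fun A => v ∈ A)
    have h2 : U.filter (fun c => v ∈ cls c) = χ v := by
      ext c
      simp only [Finset.mem_filter, hcls]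
      exact ⟨fun h => h.2, fun h => ⟨hU v c h, h⟩⟩
    rw [h2, hcard, div_self hr'.ne'] at h1
    exact le_of_eq h1.symm
  · unfold localWeight
    have hnn : (0 : ℝ) ≤ (h : ℝ) / r - 1 := by
      rw [sub_nonneg, le_div_iff₀ hr', one_mul]
      exact_mod_cast hrh
    have : (⨆ v : V, ∑ A : Finset V, if ∃ u ∈ A, D v u then x A else 0) ≤ (h : ℝ) / r - 1 := by
      refine Real.iSup_le (fun v => ?_) hnn
      have h1 := key (fun A => ∃ u ∈ A, D v u)
      refine (le_of_eq h1).trans ?_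
      have h2 : U.filter (fun c => ∃ u ∈ cls c, D v u) ⊆
          (Finset.univ.filter (fun u => D v u)).biUnion χ := by
        intro c hc
        obtain ⟨u, hu, hd⟩ := (Finset.mem_filter.1 hc).2
        exact Finset.mem_biUnion.2 ⟨u, by simpa using hd, (hcls u c).1 hu⟩
      have h3 := (Finset.card_le_card h2).trans (le_trans (le_of_eq (by congr!)) (hloc v))
      have h4 : ((U.filter (fun c => ∃ u ∈ cls c, D v u)).card : ℝ) ≤ (h : ℝ) - r := by
        rw [← Nat.cast_sub hrh]
        exact_mod_cast h3
      have h5 : (h : ℝ) / r - 1 = ((h : ℝ) - r) / r := by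
        field_simp
      rw [h5]
      gcongr
    linarith

theorem exists_multi_of_frac {V : Type} [Fintype V] (D : V → V → Prop)
    (f : FracColoring (underlying D)) (N : ℕ) (hN : 0 < N) :
    ∃ (h : ℕ) (χ : V → Finset ℕ), N ≤ h ∧ IsHLocalMulti D h N χ ∧
      (h : ℝ) / N ≤ localWeight D f + (Fintype.card (Finset V) : ℝ) / N := by
  have hN' : (0 : ℝ) < N := by exact_mod_cast hN
  let m : Finset V → ℕ := fun A => ⌈(N : ℝ) * f.x A⌉₊
  obtain ⟨e, he⟩ := exists_injective_nat ((_ : Finset V) × ℕ)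
  let S : (P : Finset V → Prop) → [DecidablePred P] → Finset ((_ : Finset V) × ℕ) := fun P _ =>
    (Finset.univ.filter P).sigma (fun A => Finset.range (m A))
  have hS : ∀ (P : Finset V → Prop) [DecidablePred P], (S P).card = ∑ A : Finset V, if P A then m A else 0 := by
    intro P _
    simp [S, Finset.card_sigma, Finset.sum_filter]
  have hbig : ∀ v, N ≤ (S (fun A => v ∈ A)).card := by
    intro v
    rw [hS]
    have h1 : (N : ℝ) ≤ ∑ A : Finset V, if v ∈ A then (m A : ℝ) else 0 := by
      calc (N : ℝ) ≤ N * ∑ A : Finset V, (if v ∈ A then f.x A else 0) :=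
            le_mul_of_one_le_right hN'.le (f.cover v)
        _ = ∑ A : Finset V, (if v ∈ A then N * f.x A else 0) := by
            rw [Finset.mul_sum]
            exact Finset.sum_congr rfl (fun A _ => by split_ifs <;> simp)
        _ ≤ _ := by
            apply Finset.sum_le_sum
            intro A _
            split_ifs
            · exact Nat.le_ceil _
            · exact le_rfl
    have h2 : ((∑ A : Finset V, if v ∈ A then m A else 0 : ℕ) : ℝ)
        = ∑ A : Finset V, if v ∈ A then (m A : ℝ) else 0 := by
      push_cast
      rfl
    rw [← h2] at h1
    exact_mod_cast h1
  choose T hT hTc using fun v => Finset.exists_subset_card_eq (hbig v)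
  let W : ℝ := ⨆ v : V, ∑ A : Finset V, if ∃ u ∈ A, D v u then f.x A else 0
  have hW0 : 0 ≤ W := Real.iSup_nonneg (fun v => Finset.sum_nonneg (fun A _ => by
    split_ifs
    · exact f.nonneg A
    · exact le_rfl))
  let B : ℝ := N * W + Fintype.card (Finset V)
  have hB0 : 0 ≤ B := by positivity
  refine ⟨N + ⌊B⌋₊, fun v => (T v).image e, Nat.le_add_right _ _, ⟨⟨?_, ?_⟩, ?_⟩, ?_⟩
  · intro v
    rw [Finset.card_image_of_injective _ he, hTc]
  · intro c u v hu hv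
    obtain ⟨p, hp, rfl⟩ := Finset.mem_image.1 hu
    obtain ⟨q, hq, hqp⟩ := Finset.mem_image.1 hv
    have := he hqp
    subst this
    have hp' := Finset.mem_sigma.1 (hT u hp)
    have hq' := Finset.mem_sigma.1 (hT v hq)
    have hx : f.x q.1 ≠ 0 := by
      intro h0
      have := Finset.mem_range.1 hp'.2
      simp [m, h0] at this
    exact f.supp q.1 hx u (Finset.mem_filter.1 hp'.1).2 v (Finset.mem_filter.1 hq'.1).2
  · intro v
    rw [Nat.add_sub_cancel_left]
    apply Nat.le_floor
    have hsub : (Finset.univ.filter (fun u => D v u)).biUnion (fun v => (T v).image e) ⊆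
        (S (fun A => ∃ u ∈ A, D v u)).image e := by
      intro c hc
      obtain ⟨u, hu, hcu⟩ := Finset.mem_biUnion.1 hc
      obtain ⟨p, hp, rfl⟩ := Finset.mem_image.1 hcu
      have hp' := Finset.mem_sigma.1 (hT u hp)
      refine Finset.mem_image_of_mem _ (Finset.mem_sigma.2 ⟨?_, hp'.2⟩)
      exact Finset.mem_filter.2 ⟨Finset.mem_univ _, u, (Finset.mem_filter.1 hp'.1).2,
        (Finset.mem_filter.1 hu).2⟩
    have h1 := (Finset.card_le_card hsub).trans Finset.card_image_le
    rw [hS] at h1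
    have h2 : (((Finset.univ.filter (fun u => D v u)).biUnion
        (fun v => (T v).image e)).card : ℝ) ≤
        ∑ A : Finset V, if ∃ u ∈ A, D v u then (m A : ℝ) else 0 := by
      refine (Nat.cast_le.2 h1).trans (le_of_eq ?_)
      push_cast
      rfl
    refine le_trans (le_of_eq (by congr!)) (h2.trans ?_)
    have h3 : (∑ A : Finset V, if ∃ u ∈ A, D v u then f.x A else 0) ≤ W :=
      le_ciSup (f := fun v : V => ∑ A : Finset V, if ∃ u ∈ A, D v u then f.x A else 0)
        (Set.finite_range _).bddAbove v
    calc (∑ A : Finset V, if ∃ u ∈ A, D v u then (m A : ℝ) else 0)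
        ≤ ∑ A : Finset V, (N * (if ∃ u ∈ A, D v u then f.x A else 0) + 1) := by
          apply Finset.sum_le_sum
          intro A _
          split_ifs
          · exact (Nat.ceil_lt_add_one (mul_nonneg hN'.le (f.nonneg A))).le
          · simp
      _ = N * (∑ A : Finset V, if ∃ u ∈ A, D v u then f.x A else 0)
            + Fintype.card (Finset V) := by
          rw [Finset.sum_add_distrib, ← Finset.mul_sum]
          simp
      _ ≤ B := by
          simp only [B]
          gcongr
  · have h1 : ((N + ⌊B⌋₊ : ℕ) : ℝ) ≤ N + B := by
      push_cast
      gcongr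
      exact Nat.floor_le hB0
    have h2 : localWeight D f + (Fintype.card (Finset V) : ℝ) / N = (N + B) / N := by
      have : localWeight D f = 1 + W := rfl
      rw [this]
      simp only [B]
      field_simp
      ring
    rw [h2]
    gcongr

theorem exists_multi {V : Type} [Fintype V] (D : V → V → Prop) :
    ∃ (h r : ℕ) (χ : V → Finset ℕ), 0 < r ∧ r ≤ h ∧ IsHLocalMulti D h r χ := by
  obtain ⟨e, he⟩ := exists_injective_nat V
  refine ⟨1 + Fintype.card V, 1, fun v => {e v}, one_pos, Nat.le_add_right _ _, ⟨⟨?_, ?_⟩, ?_⟩⟩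
  · intro v
    simp
  · intro c u v hu hv
    rw [Finset.mem_singleton] at hu hv
    have : u = v := he (hu.symm.trans hv)
    subst this
    exact SimpleGraph.irrefl _
  · intro v
    rw [Nat.add_sub_cancel_left]
    have hb : ((Finset.univ.filter (fun u => D v u)).biUnion (fun v => ({e v} : Finset ℕ))).card ≤
        ∑ u ∈ Finset.univ.filter (fun u => D v u), ({e u} : Finset ℕ).card :=
      Finset.card_biUnion_le
    refine le_trans (le_of_eq (by congr!)) (hb.trans ?_)
    simp only [Finset.card_singleton, Finset.sum_const, smul_eq_mul, mul_one]
    exact Finset.card_le_univ _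

/-- For every finite loopless digraph `D`, `ψ_d*(D)` equals the infimum of `h/r` over pairs
of positive integers `r ≤ h` such that `D` admits an `h`-local `r`-multi-coloring. -/
theorem stmt12 {V : Type} [Fintype V] (D : V → V → Prop) (hloop : ∀ v, ¬ D v v) :
    fracDirLocal D = sInf {q : ℝ | ∃ (h r : ℕ) (χ : V → Finset ℕ),
      0 < r ∧ r ≤ h ∧ IsHLocalMulti D h r χ ∧ q = (h : ℝ) / r} := by
  apply le_antisymm
  · apply le_csInf
    · obtain ⟨h, r, χ, h1, h2, h3⟩ := exists_multi D
      exact ⟨_, h, r, χ, h1, h2, h3, rfl⟩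
    · rintro q ⟨h, r, χ, h1, h2, h3, rfl⟩
      obtain ⟨f, hf⟩ := exists_frac_of_multi D h r χ h1 h2 h3
      refine le_trans (csInf_le ?_ (Exists.intro f rfl)) hf
      refine ⟨0, ?_⟩
      rintro w ⟨g, rfl⟩
      have : 0 ≤ ⨆ v : V, ∑ A : Finset V, if ∃ u ∈ A, D v u then g.x A else 0 :=
        Real.iSup_nonneg (fun v => Finset.sum_nonneg (fun A _ => by
          split_ifs
          · exact g.nonneg A
          · exact le_rfl))
      unfold localWeight
      linarith
  · apply le_csInf
    · obtain ⟨h, r, χ, h1, h2, h3⟩ := exists_multi D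
      obtain ⟨f, hf⟩ := exists_frac_of_multi D h r χ h1 h2 h3
      exact ⟨_, f, rfl⟩
    · rintro w ⟨f, rfl⟩
      have hlim : Filter.Tendsto
          (fun N : ℕ => localWeight D f + (Fintype.card (Finset V) : ℝ) / N)
          Filter.atTop (nhds (localWeight D f + 0)) :=
        tendsto_const_nhds.add (tendsto_const_div_atTop_nhds_zero_nat _)
      rw [add_zero] at hlim
      refine ge_of_tendsto hlim ?_
      filter_upwards [Filter.eventually_gt_atTop 0] with N hN
      obtain ⟨h, χ, h1, h2, h3⟩ := exists_multi_of_frac D f N hN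
      refine le_trans (csInf_le ?_ (show _ ∈ {q : ℝ | ∃ (h r : ℕ) (χ : V → Finset ℕ),
        0 < r ∧ r ≤ h ∧ IsHLocalMulti D h r χ ∧ q = (h : ℝ) / r} from
        ⟨h, N, χ, hN, h1, h2, rfl⟩)) h3
      refine ⟨0, ?_⟩
      rintro q ⟨h, r, χ, -, -, -, rfl⟩
      positivity
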